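/- For every two projection games G and H, val₊(G ⊗ H) = val₊(G) · val₊(H). -/

import Mathlib

open Finset

/-- A projection game: finite nonempty question sets `Q1` (Alice) and `Q2` (Bob),
a finite nonempty alphabet `A`, and a probability mass function `μ` on triples
`(u, v, π)` where `π : A → Option A` encodes a projection constraint
(the answer pair `(α, β)` satisfies `π` iff `π β = some α`). -/
structure ProjGame where
  Q1 : Type
  Q2 : Type
  A : Type
  [fQ1 : Fintype Q1]
  [fQ2 : Fintype Q2]
  [fA : Fintype A]
  [neQ1 : Nonempty Q1]
  [neQ2 : Nonempty Q2]
  [neA : Nonempty A]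
  [dQ1 : DecidableEq Q1]
  [dQ2 : DecidableEq Q2]
  [dA : DecidableEq A]
  μ : Q1 × Q2 × (A → Option A) → ℝ
  μ_nonneg : ∀ x, 0 ≤ μ x
  μ_sum : ∑ x, μ x = 1

attribute [instance] ProjGame.fQ1 ProjGame.fQ2 ProjGame.fA
  ProjGame.neQ1 ProjGame.neQ2 ProjGame.neA ProjGame.dQ1 ProjGame.dQ2 ProjGame.dA

namespace ProjGame

variable (G : ProjGame)

/-- The `U`-marginal (Alice-side marginal) of `μ`. -/
noncomputable def wU (u : G.Q1) : ℝ := ∑ v, ∑ π, G.μ (u, v, π)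

/-- The `V`-marginal (Bob-side marginal) of `μ`. -/
noncomputable def wV (v : G.Q2) : ℝ := ∑ u, ∑ π, G.μ (u, v, π)

/-- The game operator: `(Gf)(u,α) = E_{(v,π)|u} [∑_{β : π β = some α} f (v,β)]`. -/
noncomputable def op (f : G.Q2 × G.A → ℝ) : G.Q1 × G.A → ℝ :=
  fun p =>
    (∑ v, ∑ π, G.μ (p.1, v, π) * ∑ β, if π β = some p.2 then f (v, β) else 0) / G.wU p.1

/-- Squared norm on functions on `U × Σ`: `‖g‖² = E_u [∑_α g(u,α)²]`. -/
noncomputable def normUsq (g : G.Q1 × G.A → ℝ) : ℝ := ∑ u, G.wU u * ∑ α, (g (u, α)) ^ 2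

/-- Squared norm on functions on `V × Σ`: `‖f‖² = E_v [∑_β f(v,β)²]`. -/
noncomputable def normVsq (f : G.Q2 × G.A → ℝ) : ℝ := ∑ v, G.wV v * ∑ β, (f (v, β)) ^ 2

/-- Inner product `⟨g, g'⟩ = E_u [∑_α g(u,α) g'(u,α)]`. -/
noncomputable def inn (g g' : G.Q1 × G.A → ℝ) : ℝ :=
  ∑ u, G.wU u * ∑ α, g (u, α) * g' (u, α)

/-- An assignment for Bob. -/
def IsBob (f : G.Q2 × G.A → ℝ) : Prop := (∀ p, 0 ≤ f p) ∧ ∀ v, ∑ β, f (v, β) = 1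

/-- An assignment for Alice. -/
def IsAlice (g : G.Q1 × G.A → ℝ) : Prop := (∀ p, 0 ≤ g p) ∧ ∀ u, ∑ α, g (u, α) = 1

/-- The value of the game: `val(G) = max ⟨g, Gf⟩` over assignments. -/
noncomputable def val : ℝ :=
  sSup { x | ∃ f g, G.IsBob f ∧ G.IsAlice g ∧ x = G.inn g (G.op f) }

/-- The collision value `‖G‖ = max_f ‖Gf‖` over assignments `f` for Bob. -/
noncomputable def collVal : ℝ :=
  sSup { x | ∃ f, G.IsBob f ∧ x = Real.sqrt (G.normUsq (G.op f)) }

/-- Product of projection constraints. -/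
def tensorC {A A' : Type} (π : A → Option A) (π' : A' → Option A') :
    A × A' → Option (A × A') :=
  fun b => (π b.1).bind fun a => (π' b.2).map fun a' => (a, a')

/-- The product (parallel repetition) of two projection games. -/
noncomputable def tensor (G H : ProjGame) : ProjGame where
  Q1 := G.Q1 × H.Q1
  Q2 := G.Q2 × H.Q2
  A := G.A × H.A
  μ := fun x =>
    ∑ y : (G.Q1 × G.Q2 × (G.A → Option G.A)) × (H.Q1 × H.Q2 × (H.A → Option H.A)),
      if ((y.1.1, y.2.1), (y.1.2.1, y.2.2.1), tensorC y.1.2.2 y.2.2.2) = x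
      then G.μ y.1 * H.μ y.2 else 0
  μ_nonneg := by
    intro x
    refine Finset.sum_nonneg fun y _ => ?_
    split
    · exact mul_nonneg (G.μ_nonneg _) (H.μ_nonneg _)
    · exact le_refl 0
  μ_sum := by
    rw [Finset.sum_comm]
    simp only [Finset.sum_ite_eq, Finset.mem_univ, if_true]
    rw [Fintype.sum_prod_type]
    calc (∑ y1, ∑ y2, G.μ y1 * H.μ y2)
        = (∑ y1, G.μ y1) * (∑ y2, H.μ y2) := by rw [Finset.sum_mul_sum]
      _ = 1 := by rw [G.μ_sum, H.μ_sum, mul_one]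

/-- `G.iterTensor k` is the `(k+1)`-fold parallel repetition `G^{⊗(k+1)}`. -/
noncomputable def iterTensor (G : ProjGame) : ℕ → ProjGame
  | 0 => G
  | n + 1 => G.tensor (G.iterTensor n)

/-- `val₊(G)`: supremum of values of vector assignments. -/
noncomputable def valPlus (G : ProjGame) : ℝ :=
  sSup { x | ∃ n : ℕ, 0 < n ∧ ∃ f : G.Q2 × G.A → Fin n → ℝ,
    (∀ p i, 0 ≤ f p i) ∧
    (∀ v, Real.sqrt (∑ i, (∑ β, f (v, β) i) ^ 2) ≤ 1) ∧
    x = Real.sqrt (∑ u, G.wU u * ∑ α, ∑ i, (G.op (fun q => f q i) (u, α)) ^ 2) }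

/-- `‖Th‖² = E_v [(∑_β h(v,β))²]`. -/
noncomputable def Tnormsq (G : ProjGame) (h : G.Q2 × G.A → ℝ) : ℝ :=
  ∑ v, G.wV v * (∑ β, h (v, β)) ^ 2

/-- `λ₊(G)`: supremum of `‖Gh‖/‖Th‖` over nonnegative `h` with `‖Th‖ > 0`. -/
noncomputable def lambdaPlus (G : ProjGame) : ℝ :=
  sSup { x | ∃ h : G.Q2 × G.A → ℝ, (∀ p, 0 ≤ h p) ∧
    0 < Real.sqrt (G.Tnormsq h) ∧
    x = Real.sqrt (G.normUsq (G.op h)) / Real.sqrt (G.Tnormsq h) }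

/-- The symmetrized distribution on `V × V` (with the constraints marginalized out). -/
noncomputable def msym (G : ProjGame) (v v' : G.Q2) : ℝ :=
  ∑ u, ((∑ π, G.μ (u, v, π)) * (∑ π', G.μ (u, v', π'))) / G.wU u

/-- `G` is `γ`-expanding: the Markov operator of the symmetrized constraint graph has
spectral gap at least `γ`, i.e. `|⟨x, Ax⟩| ≤ (1-γ) E_v[x(v)²]` for mean-zero `x`. -/
def IsExpanding (G : ProjGame) (γ : ℝ) : Prop :=
  ∀ x : G.Q2 → ℝ, (∑ v, G.wV v * x v) = 0 →
    |∑ v, ∑ v', G.msym v v' * x v * x v'| ≤ (1 - γ) * ∑ v, G.wV v * (x v) ^ 2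

/-- The symmetrized distribution on `(v, v', π, π')`. -/
noncomputable def msymFull (G : ProjGame) (v v' : G.Q2) (π π' : G.A → Option G.A) : ℝ :=
  ∑ u, (G.μ (u, v, π) * G.μ (u, v', π')) / G.wU u

/-- The value of the assignment `x` in the symmetrized game `G_sym`. -/
noncomputable def symValAssign (G : ProjGame) (x : G.Q2 → G.A) : ℝ :=
  ∑ v, ∑ v', ∑ π, ∑ π', G.msymFull v v' π π' *
    (if ∃ α, π (x v) = some α ∧ π' (x v') = some α then 1 else 0)

/-- The value of the symmetrized game `G_sym`. -/
noncomputable def symVal (G : ProjGame) : ℝ :=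
  sSup { r | ∃ x : G.Q2 → G.A, r = G.symValAssign x }

end ProjGame

namespace ProjGame

theorem wU_nonneg (G : ProjGame) (u : G.Q1) : 0 ≤ G.wU u :=
  Finset.sum_nonneg fun _ _ => Finset.sum_nonneg fun _ _ => G.μ_nonneg _

theorem sum_wU (G : ProjGame) : ∑ u, G.wU u = 1 := by
  rw [← G.μ_sum, Fintype.sum_prod_type]
  refine Finset.sum_congr rfl fun u _ => ?_
  rw [Fintype.sum_prod_type]; rfl

theorem tensor_sum (G H : ProjGame) (u : G.Q1) (u' : H.Q1)
    (F : G.Q2 × H.Q2 → (G.A × H.A → Option (G.A × H.A)) → ℝ) :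
    (∑ v : G.Q2 × H.Q2, ∑ π : G.A × H.A → Option (G.A × H.A),
      (G.tensor H).μ ((u, u'), v, π) * F v π) =
    ∑ v, ∑ π, G.μ (u, v, π) * ∑ v', ∑ π', H.μ (u', v', π') * F (v, v') (tensorC π π') := by
  have h1 : ∀ (v : G.Q2 × H.Q2) (π : G.A × H.A → Option (G.A × H.A)),
      (G.tensor H).μ ((u, u'), v, π) =
      ∑ a, ∑ ρ, ∑ a', ∑ ρ', if (a, a') = v then (if tensorC ρ ρ' = π then
        G.μ (u, a, ρ) * H.μ (u', a', ρ') else 0) else 0 := by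
    intro v π
    change (∑ y : (G.Q1 × G.Q2 × (G.A → Option G.A)) × (H.Q1 × H.Q2 × (H.A → Option H.A)),
      if ((y.1.1, y.2.1), (y.1.2.1, y.2.2.1), tensorC y.1.2.2 y.2.2.2) = ((u, u'), v, π)
      then G.μ y.1 * H.μ y.2 else 0) = _
    simp only [Fintype.sum_prod_type]
    rw [Finset.sum_eq_single u]
    · refine Finset.sum_congr rfl fun a _ => Finset.sum_congr rfl fun ρ _ => ?_
      rw [Finset.sum_eq_single u']
      · refine Finset.sum_congr rfl fun a' _ => Finset.sum_congr rfl fun ρ' _ => ?_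
        by_cases h1 : (a, a') = v <;> by_cases h2 : tensorC ρ ρ' = π <;> simp [h1, h2]
      · intro b _ hb
        refine Finset.sum_eq_zero fun a' _ => Finset.sum_eq_zero fun ρ' _ => ?_
        simp [hb]
      · simp
    · intro b _ hb
      refine Finset.sum_eq_zero fun a _ => Finset.sum_eq_zero fun ρ _ => 
        Finset.sum_eq_zero fun b' _ => Finset.sum_eq_zero fun a' _ => 
        Finset.sum_eq_zero fun ρ' _ => ?_
      simp [hb]
    · simp
  simp only [h1, Finset.sum_mul, Finset.mul_sum]
  have h2 : ∀ v : G.Q2 × H.Q2, 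
     (∑ π : G.A × H.A → Option (G.A × H.A), ∑ a, ∑ ρ, ∑ a', ∑ ρ',
      (if (a, a') = v then (if tensorC ρ ρ' = π then
        G.μ (u, a, ρ) * H.μ (u', a', ρ') else 0) else 0) * F v π) = 
      ∑ a, ∑ ρ, ∑ a', ∑ ρ', if (a, a') = v then
        G.μ (u, a, ρ) * H.μ (u', a', ρ') * F v (tensorC ρ ρ') else 0 := by
    intro v
    rw [Finset.sum_comm]; refine Finset.sum_congr rfl fun a _ => ?_
    rw [Finset.sum_comm]; refine Finset.sum_congr rfl fun ρ _ => ?_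
    rw [Finset.sum_comm]; refine Finset.sum_congr rfl fun a' _ => ?_
    rw [Finset.sum_comm]; refine Finset.sum_congr rfl fun ρ' _ => ?_
    by_cases h : (a, a') = v <;> simp [h]
  simp only [h2]
  rw [Finset.sum_comm]; refine Finset.sum_congr rfl fun a _ => ?_
  rw [Finset.sum_comm]; refine Finset.sum_congr rfl fun ρ _ => ?_
  rw [Finset.sum_comm]; refine Finset.sum_congr rfl fun a' _ => ?_
  rw [Finset.sum_comm]; refine Finset.sum_congr rfl fun ρ' _ => ?_
  rw [Finset.sum_ite_eq]
  simp [mul_assoc]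

theorem tensor_wU (G H : ProjGame) (u : G.Q1) (u' : H.Q1) :
    (G.tensor H).wU (u, u') = G.wU u * H.wU u' := by
  have := tensor_sum G H u u' (fun _ _ => 1)
  simp only [mul_one] at this
  refine Eq.trans this ?_
  simp only [wU, Finset.sum_mul]

theorem tensorC_eq {A A' : Type} (π : A → Option A) (π' : A' → Option A') (b : A) (b' : A')
    (a : A) (a' : A') : tensorC π π' (b, b') = some (a, a') ↔ π b = some a ∧ π' b' = some a' := by
  unfold tensorC
  cases π b <;> cases π' b' <;> simp

theorem tensor_op (G H : ProjGame) (f : (G.Q2 × H.Q2) × (G.A × H.A) → ℝ)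
    (u : G.Q1) (u' : H.Q1) (α : G.A) (α' : H.A) :
    (G.tensor H).op f ((u, u'), (α, α')) =
    G.op (fun q => H.op (fun q' => f ((q.1, q'.1), (q.2, q'.2))) (u', α')) (u, α) := by
  have := tensor_sum G H u u' 
    (fun v π => ∑ β : G.A × H.A, if π β = some (α, α') then f (v, β) else 0)
  have e : (G.tensor H).op f ((u, u'), (α, α')) = 
    (∑ v : G.Q2 × H.Q2, ∑ π : G.A × H.A → Option (G.A × H.A),
      (G.tensor H).μ ((u, u'), v, π) * 
        ∑ β : G.A × H.A, if π β = some (α, α') then f (v, β) else 0) / 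
        (G.tensor H).wU (u, u') := rfl
  rw [e, this, tensor_wU, mul_comm (G.wU u), ← div_div]
  unfold op
  congr 1
  rw [Finset.sum_div]
  refine Finset.sum_congr rfl fun v _ => ?_
  rw [Finset.sum_div]
  refine Finset.sum_congr rfl fun π _ => ?_
  rw [mul_div_assoc]
  congr 1
  have h3 : ∀ β : G.A, (if π β = some α then
     (∑ v', ∑ π', H.μ (u', v', π') * ∑ β', if π' β' = some α' then f ((v, v'), (β, β')) else 0)
      / H.wU u' else 0) = 
     (∑ v', ∑ π', H.μ (u', v', π') * 
      ∑ β', if π β = some α ∧ π' β' = some α' then f ((v, v'), (β, β')) else 0) / H.wU u' := by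
    intro β
    by_cases h : π β = some α <;> simp [h]
  simp only [h3]
  rw [← Finset.sum_div]
  congr 1
  symm
  rw [Finset.sum_comm]; refine Finset.sum_congr rfl fun v' _ => ?_
  rw [Finset.sum_comm]; refine Finset.sum_congr rfl fun π' _ => ?_
  rw [← Finset.mul_sum, Fintype.sum_prod_type]
  simp only [tensorC_eq]

theorem op_smul (G : ProjGame) (c : ℝ) (f : G.Q2 × G.A → ℝ) (p) :
    G.op (fun q => c * f q) p = c * G.op f p := by
  unfold op
  rw [← mul_div_assoc, Finset.mul_sum]
  congr 1
  refine Finset.sum_congr rfl fun v _ => ?_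
  rw [Finset.mul_sum]
  refine Finset.sum_congr rfl fun π _ => ?_
  rw [mul_left_comm]
  congr 1
  rw [Finset.mul_sum]
  simp only [mul_ite, mul_zero]

theorem op_nonneg (G : ProjGame) (f : G.Q2 × G.A → ℝ) (hf : ∀ q, 0 ≤ f q) (p) :
    0 ≤ G.op f p := by
  unfold op
  refine div_nonneg (Finset.sum_nonneg fun v _ => Finset.sum_nonneg fun π _ => 
    mul_nonneg (G.μ_nonneg _) (Finset.sum_nonneg fun β _ => ?_)) (G.wU_nonneg _)
  split
  · exact hf _
  · exact le_rfl

theorem op_sum (G : ProjGame) (v' : Type) [Fintype v'] (f : v' → G.Q2 × G.A → ℝ) (p) :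
    ∑ b, G.op (f b) p = G.op (fun q => ∑ b, f b q) p := by
  unfold op
  rw [← Finset.sum_div]
  congr 1
  rw [Finset.sum_comm]; refine Finset.sum_congr rfl fun v _ => ?_
  rw [Finset.sum_comm]; refine Finset.sum_congr rfl fun π _ => ?_
  rw [← Finset.mul_sum, Finset.sum_comm]
  congr 1
  refine Finset.sum_congr rfl fun β _ => ?_
  split <;> simp

/-- squared value -/
noncomputable def Q (G : ProjGame) {ι : Type} [Fintype ι] (f : G.Q2 × G.A → ι → ℝ) : ℝ :=
  ∑ u, G.wU u * ∑ α, ∑ i, (G.op (fun q => f q i) (u, α)) ^ 2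

theorem Q_nonneg (G : ProjGame) {ι : Type} [Fintype ι] (f : G.Q2 × G.A → ι → ℝ) : 0 ≤ G.Q f :=
  Finset.sum_nonneg fun u _ => mul_nonneg (G.wU_nonneg u) <|
    Finset.sum_nonneg fun _ _ => Finset.sum_nonneg fun _ _ => sq_nonneg _

theorem sum_op_le (G : ProjGame) (f : G.Q2 × G.A → ℝ) (hf : ∀ q, 0 ≤ f q) (u) :
    ∑ α, G.op f (u, α) ≤ ∑ v, ∑ β, f (v, β) := by
  simp only [op]
  rw [← Finset.sum_div]
  refine div_le_of_le_mul₀ (G.wU_nonneg _) (Finset.sum_nonneg fun _ _ => 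
    Finset.sum_nonneg fun _ _ => hf _) ?_
  rw [Finset.sum_comm, Finset.sum_mul]
  refine Finset.sum_le_sum fun v _ => ?_
  rw [Finset.sum_comm]
  have h : ∀ π : G.A → Option G.A, 
     (∑ α, G.μ (u, v, π) * ∑ β, if π β = some α then f (v, β) else 0) ≤
     G.μ (u, v, π) * ∑ β, f (v, β) := by
    intro π
    rw [← Finset.mul_sum, Finset.sum_comm]
    refine mul_le_mul_of_nonneg_left (Finset.sum_le_sum fun β _ => ?_) (G.μ_nonneg _)
    rcases h : π β with _ | a
    · simpa using hf _
    · simp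
  refine (Finset.sum_le_sum fun π _ => h π).trans ?_
  rw [← Finset.sum_mul, mul_comm]
  refine mul_le_mul_of_nonneg_left ?_ (Finset.sum_nonneg fun _ _ => hf _)
  exact Finset.single_le_sum (f := fun v => ∑ π, G.μ (u, v, π)) 
    (fun v _ => Finset.sum_nonneg fun π _ => G.μ_nonneg _) (Finset.mem_univ v)

theorem Q_le_card (G : ProjGame) {ι : Type} [Fintype ι] (f : G.Q2 × G.A → ι → ℝ)
    (hf : ∀ q i, 0 ≤ f q i) (h : ∀ v, ∑ i, (∑ β, f (v, β) i) ^ 2 ≤ 1) :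
    G.Q f ≤ (Fintype.card G.Q2 : ℝ) ^ 2 := by
  have key : ∀ u, ∑ α, ∑ i, (G.op (fun q => f q i) (u, α)) ^ 2 ≤ (Fintype.card G.Q2 : ℝ) ^ 2 := by
    intro u
    rw [Finset.sum_comm]
    calc _ ≤ ∑ i, (∑ v, ∑ β, f (v, β) i) ^ 2 := by
          refine Finset.sum_le_sum fun i _ => ?_
          refine (Finset.sum_sq_le_sq_sum_of_nonneg 
            fun α _ => G.op_nonneg _ (fun q => hf q i) _).trans ?_
          exact pow_le_pow_left₀ (Finset.sum_nonneg fun α _ => 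
            G.op_nonneg _ (fun q => hf q i) _) (G.sum_op_le _ (fun q => hf q i) u) 2
      _ ≤ ∑ i, (Fintype.card G.Q2 : ℝ) * ∑ v, (∑ β, f (v, β) i) ^ 2 := by
          refine Finset.sum_le_sum fun i _ => ?_
          exact sq_sum_le_card_mul_sum_sq
      _ = (Fintype.card G.Q2 : ℝ) * ∑ v, ∑ i, (∑ β, f (v, β) i) ^ 2 := by
          rw [← Finset.mul_sum, Finset.sum_comm]
      _ ≤ (Fintype.card G.Q2 : ℝ) * ∑ v : G.Q2, 1 := by
          gcongr with v _; exact h v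
      _ = _ := by simp [sq]
  calc G.Q f ≤ ∑ u, G.wU u * (Fintype.card G.Q2 : ℝ) ^ 2 :=
        Finset.sum_le_sum fun u _ => mul_le_mul_of_nonneg_left (key u) (G.wU_nonneg u)
    _ = _ := by rw [← Finset.sum_mul, sum_wU, one_mul]

def S (G : ProjGame) : Set ℝ := { x | ∃ n : ℕ, 0 < n ∧ ∃ f : G.Q2 × G.A → Fin n → ℝ,
    (∀ p i, 0 ≤ f p i) ∧
    (∀ v, Real.sqrt (∑ i, (∑ β, f (v, β) i) ^ 2) ≤ 1) ∧
    x = Real.sqrt (G.Q f) }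

theorem valPlus_eq (G : ProjGame) : G.valPlus = sSup G.S := rfl

theorem S_bdd (G : ProjGame) : BddAbove G.S := by
  refine ⟨Fintype.card G.Q2, ?_⟩
  rintro x ⟨n, hn, f, hf, h, rfl⟩
  refine Real.sqrt_le_iff.2 ⟨by positivity, G.Q_le_card f hf fun v => ?_⟩
  simpa using h v

theorem S_nonneg (G : ProjGame) (x) (hx : x ∈ G.S) : 0 ≤ x := by
  obtain ⟨n, hn, f, hf, h, rfl⟩ := hx
  exact Real.sqrt_nonneg _

theorem S_ne (G : ProjGame) : G.S.Nonempty :=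
  ⟨_, 1, one_pos, fun _ _ => 0, fun _ _ => le_rfl, by simp, rfl⟩

theorem valPlus_nonneg (G : ProjGame) : 0 ≤ G.valPlus := Real.sSup_nonneg G.S_nonneg

theorem Q_smul (G : ProjGame) {ι : Type} [Fintype ι] (c : ℝ) (f : G.Q2 × G.A → ι → ℝ) :
    G.Q (fun q i => c * f q i) = c ^ 2 * G.Q f := by
  simp only [Q, op_smul, mul_pow, Finset.mul_sum]
  simp only [mul_left_comm]

theorem Q_le_one (G : ProjGame) {ι : Type} [Fintype ι] (f : G.Q2 × G.A → ι → ℝ)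
    (hf : ∀ q i, 0 ≤ f q i) (h : ∀ v, ∑ i, (∑ β, f (v, β) i) ^ 2 ≤ 1) :
    G.Q f ≤ G.valPlus ^ 2 := by
  rcases isEmpty_or_nonempty ι with hι | hι
  · simp only [Q, Finset.univ_eq_empty, Finset.sum_empty, Finset.sum_const_zero, mul_zero]
    positivity
  let e := (Fintype.equivFin ι).symm
  have hS : Real.sqrt (G.Q f) ∈ G.S := by
    refine ⟨Fintype.card ι, Fintype.card_pos, fun q i => f q (e i), fun q i => hf q _, ?_, ?_⟩
    · intro v
      rw [Real.sqrt_le_one]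
      rw [e.sum_comp (fun i => (∑ β, f (v, β) i) ^ 2)]
      exact h v
    · congr 1
      unfold Q
      refine Finset.sum_congr rfl fun u _ => ?_
      congr 1
      refine Finset.sum_congr rfl fun α _ => ?_
      rw [e.sum_comp (fun i => (G.op (fun q => f q i) (u, α)) ^ 2)]
  have := le_csSup G.S_bdd hS
  rw [← valPlus_eq] at this
  exact (Real.sqrt_le_left G.valPlus_nonneg).1 this

theorem Q_le (G : ProjGame) {ι : Type} [Fintype ι] (f : G.Q2 × G.A → ι → ℝ)
    (hf : ∀ q i, 0 ≤ f q i) (c : ℝ) (hc : 0 ≤ c)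
    (h : ∀ v, ∑ i, (∑ β, f (v, β) i) ^ 2 ≤ c ^ 2) :
    G.Q f ≤ G.valPlus ^ 2 * c ^ 2 := by
  have pos : ∀ c : ℝ, 0 < c → (∀ v, ∑ i, (∑ β, f (v, β) i) ^ 2 ≤ c ^ 2) →
      G.Q f ≤ G.valPlus ^ 2 * c ^ 2 := by
    intro c hc h
    have := G.Q_le_one (fun q i => c⁻¹ * f q i) (fun q i => mul_nonneg (by positivity) (hf q i)) (by
      intro v
      simp only [← Finset.mul_sum, mul_pow]
      rw [inv_pow, inv_mul_le_iff₀ (by positivity), mul_one]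
      exact h v)
    rw [Q_smul, inv_pow, inv_mul_le_iff₀ (by positivity)] at this
    linarith
  rcases hc.lt_or_eq with hc | rfl
  · exact pos c hc h
  · have t : Filter.Tendsto (fun c : ℝ => G.valPlus ^ 2 * c ^ 2) (nhdsWithin 0 (Set.Ioi 0))
        (nhds (G.valPlus ^ 2 * 0 ^ 2)) := 
      (Continuous.tendsto (by fun_prop) 0).mono_left nhdsWithin_le_nhds
    refine ge_of_tendsto t ?_
    filter_upwards [self_mem_nhdsWithin] with c hc
    exact pos c hc fun v => (h v).trans (by simpa using sq_nonneg c)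

theorem upper (G H : ProjGame) {ι : Type} [Fintype ι]
    (f : (G.Q2 × H.Q2) × (G.A × H.A) → ι → ℝ) (hf : ∀ q i, 0 ≤ f q i)
    (h : ∀ v : G.Q2 × H.Q2, ∑ i, (∑ β : G.A × H.A, f (v, β) i) ^ 2 ≤ 1) :
    (G.tensor H).Q (ι := ι) f ≤ G.valPlus ^ 2 * H.valPlus ^ 2 := by
  let g : G.Q2 × G.A → (H.Q1 × H.A × ι) → ℝ := fun q j =>
    Real.sqrt (H.wU j.1) * H.op (fun q' => f ((q.1, q'.1), (q.2, q'.2)) j.2.2) (j.1, j.2.1)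
  have e : (G.tensor H).Q (ι := ι) f = G.Q g := by
    have : (G.tensor H).Q (ι := ι) f = ∑ u : G.Q1 × H.Q1, (G.tensor H).wU u * 
      ∑ α : G.A × H.A, ∑ i, ((G.tensor H).op (fun q => f q i) (u, α)) ^ 2 := rfl
    rw [this]
    have o : ∀ u u' α α' i, (G.tensor H).op (fun q => f q i) ((u, u'), (α, α')) =
        G.op (fun q => H.op (fun q' => f ((q.1, q'.1), (q.2, q'.2)) i) (u', α')) (u, α) :=
      fun u u' α α' i => tensor_op G H (fun q => f q i) u u' α α'
    simp only [Fintype.sum_prod_type, tensor_wU, o, Q, g, op_smul, mul_pow,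
      Real.sq_sqrt (H.wU_nonneg _)]
    refine Finset.sum_congr rfl fun u _ => ?_
    simp only [Finset.mul_sum]
    rw [Finset.sum_comm]
    refine Finset.sum_congr rfl fun α _ => ?_
    simp only [mul_assoc]
  rw [e]
  refine G.Q_le g (fun q j => mul_nonneg (Real.sqrt_nonneg _) 
    (H.op_nonneg _ (fun q' => hf _ _) _)) _ H.valPlus_nonneg fun v => ?_
  have := H.Q_le_one (fun q' i => ∑ β, f ((v, q'.1), (β, q'.2)) i) 
    (fun q' i => Finset.sum_nonneg fun β _ => hf _ _) (by
      intro v'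
      refine le_of_eq_of_le ?_ (h (v, v'))
      refine Finset.sum_congr rfl fun i _ => ?_
      rw [Fintype.sum_prod_type, Finset.sum_comm])
  refine le_of_eq_of_le ?_ this
  simp only [g, ← Finset.mul_sum, op_sum, mul_pow, Real.sq_sqrt (H.wU_nonneg _), Q,
    Fintype.sum_prod_type]

theorem lower (G H : ProjGame) {ι κ : Type} [Fintype ι] [Fintype κ]
    (f : G.Q2 × G.A → ι → ℝ) (hf : ∀ q i, 0 ≤ f q i) 
    (h : ∀ v, ∑ i, (∑ β, f (v, β) i) ^ 2 ≤ 1)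
    (f' : H.Q2 × H.A → κ → ℝ) (hf' : ∀ q i, 0 ≤ f' q i) 
    (h' : ∀ v, ∑ i, (∑ β, f' (v, β) i) ^ 2 ≤ 1) :
    G.Q f * H.Q f' ≤ (G.tensor H).valPlus ^ 2 := by
  let F : (G.Q2 × H.Q2) × (G.A × H.A) → ι × κ → ℝ := fun q j =>
    f' (q.1.2, q.2.2) j.2 * f (q.1.1, q.2.1) j.1
  have e : (G.tensor H).Q (ι := ι × κ) F = G.Q f * H.Q f' := by
    have : (G.tensor H).Q (ι := ι × κ) F = ∑ u : G.Q1 × H.Q1, (G.tensor H).wU u * 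
      ∑ α : G.A × H.A, ∑ i, ((G.tensor H).op (fun q => F q i) (u, α)) ^ 2 := rfl
    rw [this]
    have o : ∀ u u' α α' i j, (G.tensor H).op (fun q => F q (i, j)) ((u, u'), (α, α')) =
        G.op (fun q => f q i) (u, α) * H.op (fun q => f' q j) (u', α') := by
      intro u u' α α' i j
      refine (tensor_op G H (fun q => F q (i, j)) u u' α α').trans ?_
      have h1 : ∀ q : G.Q2 × G.A, H.op (fun q' => F ((q.1, q'.1), (q.2, q'.2)) (i, j)) (u', α') =
          H.op (fun q => f' q j) (u', α') * f q i := by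
        intro q
        rw [mul_comm, ← op_smul]
        simp only [F, mul_comm]
      simp only [h1]
      rw [op_smul, mul_comm]
    simp only [Fintype.sum_prod_type, tensor_wU, o, Q, mul_pow]
    rw [Finset.sum_mul_sum]
    refine Finset.sum_congr rfl fun u _ => Finset.sum_congr rfl fun u' _ => ?_
    rw [mul_mul_mul_comm]
    congr 1
    rw [Finset.sum_mul_sum]
    refine Finset.sum_congr rfl fun α _ => Finset.sum_congr rfl fun α' _ => ?_
    rw [Finset.sum_mul_sum]
  rw [← e]
  refine (G.tensor H).Q_le_one (ι := ι × κ) F (fun q j => mul_nonneg (hf' _ _) (hf _ _)) ?_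
  rintro ⟨v, v'⟩
  change ∑ j : ι × κ, (∑ β : G.A × H.A, f' (v', β.2) j.2 * f (v, β.1) j.1) ^ 2 ≤ 1
  have : ∑ j : ι × κ, (∑ β : G.A × H.A, f' (v', β.2) j.2 * f (v, β.1) j.1) ^ 2 =
     (∑ i, (∑ β, f (v, β) i) ^ 2) * (∑ i, (∑ β, f' (v', β) i) ^ 2) := by
    rw [Finset.sum_mul_sum]
    simp only [Fintype.sum_prod_type, ← mul_pow, Finset.sum_mul_sum, mul_comm]
  rw [this]
  exact mul_le_one₀ (h v) (Finset.sum_nonneg fun _ _ => sq_nonneg _) (h' v')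

end ProjGame

/-- **Multiplicativity.** For every two projection games `G`, `H`,
`val₊(G ⊗ H) = val₊(G) · val₊(H)`. -/
theorem valPlus_multiplicative (G H : ProjGame) :
    (G.tensor H).valPlus = G.valPlus * H.valPlus := by
  apply le_antisymm
  · rw [ProjGame.valPlus_eq]
    refine csSup_le (G.tensor H).S_ne ?_
    rintro x ⟨n, hn, f, hf, h, rfl⟩
    refine Real.sqrt_le_iff.2 ⟨mul_nonneg G.valPlus_nonneg H.valPlus_nonneg, ?_⟩
    rw [mul_pow]
    exact ProjGame.upper G H f hf fun v => Real.sqrt_le_one.1 (h v)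
  · have key : ∀ x ∈ G.S, ∀ y ∈ H.S, x * y ≤ (G.tensor H).valPlus := by
      rintro x ⟨n, hn, f, hf, h, rfl⟩ y ⟨n', hn', f', hf', h', rfl⟩
      rw [← Real.sqrt_mul (G.Q_nonneg f)]
      refine Real.sqrt_le_iff.2 ⟨(G.tensor H).valPlus_nonneg, ?_⟩
      exact ProjGame.lower G H f hf (fun v => Real.sqrt_le_one.1 (h v))
        f' hf' (fun v => Real.sqrt_le_one.1 (h' v))
    have k2 : ∀ y ∈ H.S, G.valPlus * y ≤ (G.tensor H).valPlus := by
      intro y hy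
      rcases (H.S_nonneg y hy).lt_or_eq with h | h
      · rw [← le_div_iff₀ h]
        exact csSup_le G.S_ne fun x hx => (le_div_iff₀ h).2 (key x hx y hy)
      · rw [← h, mul_zero]; exact (G.tensor H).valPlus_nonneg
    rcases G.valPlus_nonneg.lt_or_eq with h | h
    · rw [← le_div_iff₀' h]
      exact csSup_le H.S_ne fun y hy => (le_div_iff₀' h).2 (k2 y hy)
    · rw [← h, zero_mul]; exact (G.tensor H).valPlus_nonneg
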